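/- The partition-of-unity blend of local plane models with the exponential blender ψ is globally infinitely smooth: for arbitrary coefficient families a', b', c' : ℤ × ℤ → ℝ, the function g : ℝ × ℝ → ℝ defined by g(x, y) = ∑_{(α,β) ∈ ℤ×ℤ} (a'(α,β)·x + b'(α,β)·y + c'(α,β)) · ψ(x − α·a) · ψ(y − β·a) (a locally finite sum, since ψ is compactly supported) satisfies ContDiff ℝ ⊤ g. -/

import Mathlib

open Real

/-- The compactly supported exponential blender with smoothing parameter `s`
and support half-width `a`. -/
noncomputable def expBlender (s a : ℝ) (x : ℝ) : ℝ :=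
  if x = 0 then 1
  else if a ≤ |x| then 0
  else 1 / (Real.exp (s * (1 / (1 - |x| / a) - 1 / (|x| / a))) + 1)

/-- One-sided smooth step: `1` for `t ≤ 0` and `0` for `t ≥ 1`. -/
noncomputable def blendStep (s t : ℝ) : ℝ :=
  expNegInvGlue ((1 - t) / s) / (expNegInvGlue ((1 - t) / s) + expNegInvGlue (t / s))

theorem blendStep_denom_pos (s t : ℝ) (hs : 0 < s) :
    0 < expNegInvGlue ((1 - t) / s) + expNegInvGlue (t / s) := by
  rcases lt_or_ge 0 t with h | h
  · exact add_pos_of_nonneg_of_pos (expNegInvGlue.nonneg _)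
      (expNegInvGlue.pos_of_pos (div_pos h hs))
  · exact add_pos_of_pos_of_nonneg
      (expNegInvGlue.pos_of_pos (div_pos (by linarith) hs)) (expNegInvGlue.nonneg _)

theorem blendStep_contDiff (s : ℝ) (hs : 0 < s) :
    ContDiff ℝ (⊤ : ℕ∞) (blendStep s) := by
  have hE : ContDiff ℝ (⊤ : ℕ∞) expNegInvGlue := expNegInvGlue.contDiff
  have h1 : ContDiff ℝ (⊤ : ℕ∞) (fun t : ℝ => expNegInvGlue ((1 - t) / s)) :=
    hE.comp ((contDiff_const.sub contDiff_id).div_const s)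
  have h2 : ContDiff ℝ (⊤ : ℕ∞) (fun t : ℝ => expNegInvGlue (t / s)) :=
    hE.comp (contDiff_id.div_const s)
  exact h1.div (h1.add h2) (fun t => (blendStep_denom_pos s t hs).ne')

theorem blendStep_of_nonpos (s t : ℝ) (hs : 0 < s) (ht : t ≤ 0) : blendStep s t = 1 := by
  have hd := blendStep_denom_pos s t hs
  have h0 : expNegInvGlue (t / s) = 0 :=
    expNegInvGlue.zero_of_nonpos (div_nonpos_of_nonpos_of_nonneg ht hs.le)
  rw [h0, add_zero] at hd
  rw [blendStep, h0, add_zero, div_self hd.ne']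

theorem blendStep_of_one_le (s t : ℝ) (hs : 0 < s) (ht : 1 ≤ t) : blendStep s t = 0 := by
  have h0 : expNegInvGlue ((1 - t) / s) = 0 :=
    expNegInvGlue.zero_of_nonpos (div_nonpos_of_nonpos_of_nonneg (by linarith) hs.le)
  rw [blendStep, h0, zero_div]

theorem blendStep_of_mem (s t : ℝ) (hs : 0 < s) (h0 : 0 < t) (h1 : t < 1) :
    blendStep s t = 1 / (Real.exp (s * (1 / (1 - t) - 1 / t)) + 1) := by
  have h1' : 0 < 1 - t := by linarith
  have e : s * (1 / (1 - t) - 1 / t) = -(t / s)⁻¹ - (-((1 - t) / s)⁻¹) := by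
    rw [inv_div, inv_div]; ring
  rw [e, Real.exp_sub, blendStep, expNegInvGlue, expNegInvGlue,
    if_neg (not_le.2 (div_pos h0 hs)), if_neg (not_le.2 (div_pos h1' hs))]
  have := Real.exp_pos (-((1 - t) / s)⁻¹)
  have := Real.exp_pos (-(t / s)⁻¹)
  generalize Real.exp (-((1 - t) / s)⁻¹) = A at *
  generalize Real.exp (-(t / s)⁻¹) = B at *
  field_simp
  ring

theorem expBlender_eq_abs (s a x : ℝ) (hs : 0 < s) (ha : 0 < a) :
    expBlender s a x = blendStep s (|x| / a) := by
  unfold expBlender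
  split_ifs with h h'
  · rw [blendStep_of_nonpos s _ hs (by simp [h])]
  · rw [blendStep_of_one_le s _ hs ((one_le_div ha).2 h')]
  · rw [blendStep_of_mem s _ hs (div_pos (abs_pos.2 h) ha)
      ((div_lt_one ha).2 (not_le.1 h'))]

theorem expBlender_eq_mul (s a x : ℝ) (hs : 0 < s) (ha : 0 < a) :
    expBlender s a x = blendStep s (x / a) * blendStep s (-x / a) := by
  rw [expBlender_eq_abs s a x hs ha]
  rcases le_total 0 x with h | h
  · rw [abs_of_nonneg h, blendStep_of_nonpos s (-x / a) hs
      (div_nonpos_of_nonpos_of_nonneg (by linarith) ha.le), mul_one]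
  · rw [abs_of_nonpos h, blendStep_of_nonpos s (x / a) hs
      (div_nonpos_of_nonpos_of_nonneg h ha.le), one_mul]

theorem expBlender_contDiff (s a : ℝ) (hs : 0 < s) (ha : 0 < a) :
    ContDiff ℝ (⊤ : ℕ∞) (expBlender s a) := by
  have e : expBlender s a = fun x => blendStep s (x / a) * blendStep s (-x / a) :=
    funext fun x => expBlender_eq_mul s a x hs ha
  rw [e]
  exact ((blendStep_contDiff s hs).comp (contDiff_id.div_const a)).mul
    ((blendStep_contDiff s hs).comp (contDiff_id.neg.div_const a))

theorem expBlender_zero (s a x : ℝ) (hs : 0 < s) (ha : 0 < a) (h : a ≤ |x|) :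
    expBlender s a x = 0 := by
  rw [expBlender_eq_abs s a x hs ha, blendStep_of_one_le s _ hs ((one_le_div ha).2 h)]

/-- Near `x₀` only grid indices in a fixed finite interval contribute. -/
theorem expBlender_index (s a x₀ x : ℝ) (hs : 0 < s) (ha : 0 < a) (hx : |x - x₀| < a) (n : ℤ)
    (hn : n ∉ Finset.Icc ⌊x₀ / a - 2⌋ ⌈x₀ / a + 2⌉) :
    expBlender s a (x - n * a) = 0 := by
  apply expBlender_zero s a _ hs ha
  by_contra hlt
  rw [not_le] at hlt
  apply hn
  rw [abs_lt] at hx hlt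
  have e : x₀ / a * a = x₀ := div_mul_cancel₀ _ ha.ne'
  rw [Finset.mem_Icc]
  constructor
  · have h1 := Int.floor_le (x₀ / a - 2)
    have : (⌊x₀ / a - 2⌋ : ℝ) ≤ n := by
      refine h1.trans (le_of_mul_le_mul_right ?_ ha)
      rw [sub_mul, e]; linarith
    exact_mod_cast this
  · have h1 := Int.le_ceil (x₀ / a + 2)
    have : (n : ℝ) ≤ ⌈x₀ / a + 2⌉ := by
      refine le_trans (le_of_mul_le_mul_right ?_ ha) h1
      rw [add_mul, e]; linarith
    exact_mod_cast this

theorem expBlender_blend_of_planes_smooth (s a : ℝ) (hs : 0 < s) (ha : 0 < a)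
    (a' b' c' : ℤ × ℤ → ℝ) :
    ContDiff ℝ (⊤ : ℕ∞) (fun q : ℝ × ℝ =>
      ∑' p : ℤ × ℤ, (a' p * q.1 + b' p * q.2 + c' p) *
        expBlender s a (q.1 - p.1 * a) * expBlender s a (q.2 - p.2 * a)) := by
  rw [contDiff_iff_contDiffAt]
  intro q₀
  have hψ := expBlender_contDiff s a hs ha
  have hfin : ContDiff ℝ (⊤ : ℕ∞) (fun q : ℝ × ℝ =>
      ∑ p ∈ Finset.Icc ⌊q₀.1 / a - 2⌋ ⌈q₀.1 / a + 2⌉ ×ˢ Finset.Icc ⌊q₀.2 / a - 2⌋ ⌈q₀.2 / a + 2⌉,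
        (a' p * q.1 + b' p * q.2 + c' p) *
        expBlender s a (q.1 - p.1 * a) * expBlender s a (q.2 - p.2 * a)) := by
    refine ContDiff.sum fun p _ => ?_
    refine ContDiff.mul (ContDiff.mul ?_ (hψ.comp (contDiff_fst.sub contDiff_const)))
      (hψ.comp (contDiff_snd.sub contDiff_const))
    exact ((contDiff_const.mul contDiff_fst).add (contDiff_const.mul contDiff_snd)).add
      contDiff_const
  refine hfin.contDiffAt.congr_of_eventuallyEq ?_
  filter_upwards [Metric.ball_mem_nhds q₀ ha] with q hq
  rw [Metric.mem_ball, Prod.dist_eq, max_lt_iff, Real.dist_eq, Real.dist_eq] at hq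
  refine tsum_eq_sum fun p hp => ?_
  rw [Finset.mem_product, not_and_or] at hp
  rcases hp with hp | hp
  · rw [expBlender_index s a _ _ hs ha hq.1 _ hp]; ring
  · rw [expBlender_index s a _ _ hs ha hq.2 _ hp]; ring
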